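/- Let C be an [n,k] rank metric code with k ≥ 1, G a generator matrix of C, and U the F-span of the columns of G in the space of column vectors E^{[k]}. Then: (i) for any E-subspace B of E^k and D = {γG : γ ∈ B}, D is rank minimal in C if and only if the E-span of B‡ ∩ U equals B‡; (ii) for any r ∈ {0,1,…,k}, C is r-minimal if and only if U is a cutting r-blocking set of E^{[k]}. -/

import Mathlib

open Submodule Pointwise

/-- The coordinatewise inclusion of `F^n` into `E^n`. -/
noncomputable def fIncl (F E : Type*) [Field F] [Field E] [Algebra F E] (n : ℕ) :
    (Fin n → F) →ₗ[F] (Fin n → E) :=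
  LinearMap.compLeft (Algebra.linearMap F E) (Fin n)

/-- The rank support `χ(A)` of `A ⊆ E^n`: the smallest `F`-subspace `U` of `F^n`
such that `A` is contained in the `E`-span of (the image in `E^n` of) `U`. -/
noncomputable def rankSupport (F E : Type*) [Field F] [Field E] [Algebra F E] (n : ℕ)
    (A : Set (Fin n → E)) : Submodule F (Fin n → F) :=
  sInf {U : Submodule F (Fin n → F) |
    A ⊆ (Submodule.span E (fIncl F E n '' (U : Set (Fin n → F))) : Set (Fin n → E))}

/-- The rank support weight `wt(A) = dim_F χ(A)`. -/
noncomputable def wt (F E : Type*) [Field F] [Field E] [Algebra F E] (n : ℕ)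
    (A : Set (Fin n → E)) : ℕ :=
  Module.finrank F (rankSupport F E n A)

/-- `D` is rank minimal in `C`: any subcode `B ≤ C` of the same dimension with
`χ(B) ⊆ χ(D)` satisfies `χ(B) = χ(D)`. -/
def RankMinimal (F E : Type*) [Field F] [Field E] [Algebra F E] (n : ℕ)
    (C D : Submodule E (Fin n → E)) : Prop :=
  ∀ B : Submodule E (Fin n → E), B ≤ C → Module.finrank E B = Module.finrank E D →
    rankSupport F E n (B : Set (Fin n → E)) ≤ rankSupport F E n (D : Set (Fin n → E)) →
    rankSupport F E n (B : Set (Fin n → E)) = rankSupport F E n (D : Set (Fin n → E))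

/-- `C` is `r`-minimal with respect to the rank metric. -/
def IsRMinimal (F E : Type*) [Field F] [Field E] [Algebra F E] (n : ℕ)
    (C : Submodule E (Fin n → E)) (r : ℕ) : Prop :=
  ∀ D : Submodule E (Fin n → E), D ≤ C → Module.finrank E D = r → RankMinimal F E n C D

/-- The dual `B^⊥` of `B ≤ E^k` with respect to the standard bilinear form. -/
noncomputable def dualSub (E : Type*) [Field E] (k : ℕ) (B : Submodule E (Fin k → E)) :
    Submodule E (Fin k → E) :=
  ⨅ γ ∈ B, LinearMap.ker (∑ i, γ i • (LinearMap.proj i : (Fin k → E) →ₗ[E] E))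

/-- `S` is a cutting `r`-blocking set of `L`: for every submodule `V` of codimension `r`,
the span of `S ∩ V` is all of `V`. -/
def IsCuttingBlocking (R : Type*) {L : Type*} [DivisionRing R] [AddCommGroup L] [Module R L]
    (S : Set L) (r : ℕ) : Prop :=
  ∀ V : Submodule R L, Module.finrank R V = Module.finrank R L - r →
    Submodule.span R (S ∩ (V : Set L)) = V

open Matrix in
theorem mem_dualSub (K : Type*) [Field K] (k : ℕ) (B : Submodule K (Fin k → K)) (v : Fin k → K) :
    v ∈ dualSub K k B ↔ ∀ γ ∈ B, γ ⬝ᵥ v = 0 := by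
  simp [dualSub, Submodule.mem_iInf, dotProduct]

theorem dualSub_eq (K : Type*) [Field K] (k : ℕ) (B : Submodule K (Fin k → K)) :
    dualSub K k B = (Matrix.toBilin' (1 : Matrix (Fin k) (Fin k) K)).orthogonal B := by
  ext v
  rw [mem_dualSub]
  simp [LinearMap.BilinForm.mem_orthogonal_iff, Matrix.toBilin'_apply']

theorem one_nondeg (K : Type*) [Field K] (k : ℕ) :
    (Matrix.toBilin' (1 : Matrix (Fin k) (Fin k) K)).Nondegenerate :=
  LinearMap.BilinForm.nondegenerate_toBilin'_of_det_ne_zero' _ (by simp)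

theorem finrank_dualSub (K : Type*) [Field K] (k : ℕ) (B : Submodule K (Fin k → K)) :
    Module.finrank K (dualSub K k B) = k - Module.finrank K B := by
  rw [dualSub_eq, LinearMap.BilinForm.finrank_orthogonal (one_nondeg K k)]
  simp

theorem dualSub_dualSub (K : Type*) [Field K] (k : ℕ) (B : Submodule K (Fin k → K)) :
    dualSub K k (dualSub K k B) = B := by
  rw [dualSub_eq, dualSub_eq]
  refine LinearMap.BilinForm.orthogonal_orthogonal (one_nondeg K k) ?_ B
  intro x y h
  simp only [Matrix.toBilin'_apply', Matrix.one_mulVec] at h ⊢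
  rw [dotProduct_comm]; exact h

theorem dualSub_anti (K : Type*) [Field K] (k : ℕ) {B B' : Submodule K (Fin k → K)} (h : B ≤ B') :
    dualSub K k B' ≤ dualSub K k B := by
  intro v hv
  rw [mem_dualSub] at hv ⊢
  exact fun γ hγ => hv γ (h hγ)

theorem exists_super (K V : Type*) [Field K] [AddCommGroup V] [Module K V] [FiniteDimensional K V]
    (W : Submodule K V) (d : ℕ) (h1 : Module.finrank K W ≤ d) (h2 : d ≤ Module.finrank K V) :
    ∃ W' : Submodule K V, W ≤ W' ∧ Module.finrank K W' = d := by
  induction d, h1 using Nat.le_induction with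
  | base => exact ⟨W, le_rfl, rfl⟩
  | succ d hd ih =>
    obtain ⟨W', hW, hd'⟩ := ih (by omega)
    have : ∃ v, v ∉ W' := by
      by_contra hh
      push Not at hh
      have : W' = ⊤ := by
        ext v; simp [hh v]
      rw [this, finrank_top] at hd'
      omega
    obtain ⟨v, hv⟩ := this
    exact ⟨W' ⊔ Submodule.span K {v}, hW.trans le_sup_left, by
      rw [Submodule.finrank_sup_span_singleton hv, hd']⟩

section
variable (F E : Type*) [Field F] [Field E] [Algebra F E]

theorem fIncl_app (n : ℕ) (u : Fin n → F) (i : Fin n) :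
    fIncl F E n u i = algebraMap F E (u i) := rfl

theorem fIncl_dot (n : ℕ) (u w : Fin n → F) :
    fIncl F E n u ⬝ᵥ fIncl F E n w = algebraMap F E (u ⬝ᵥ w) := by
  simp [dotProduct, fIncl_app]

/-- The `F`-rational vectors orthogonal to `A`. -/
def perpF (n : ℕ) (A : Set (Fin n → E)) : Submodule F (Fin n → F) where
  carrier := {u | ∀ a ∈ A, a ⬝ᵥ fIncl F E n u = 0}
  zero_mem' := by intro a _; simp
  add_mem' := by
    intro u v hu hv a ha
    rw [map_add, dotProduct_add, hu a ha, hv a ha, add_zero]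
  smul_mem' := by
    intro c u hu a ha
    rw [map_smul, dotProduct_smul, hu a ha, smul_zero]

theorem mem_perpF (n : ℕ) (A : Set (Fin n → E)) (u : Fin n → F) :
    u ∈ perpF F E n A ↔ ∀ a ∈ A, a ⬝ᵥ fIncl F E n u = 0 := Iff.rfl

theorem mem_span_incl [FiniteDimensional F E] (n : ℕ) (W : Submodule F (Fin n → F))
    (a : Fin n → E) :
    a ∈ Submodule.span E (fIncl F E n '' (W : Set (Fin n → F))) ↔
      ∀ u ∈ dualSub F n W, a ⬝ᵥ fIncl F E n u = 0 := by
  constructor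
  · intro ha u hu
    induction ha using Submodule.span_induction with
    | mem x hx =>
      obtain ⟨w, hw, rfl⟩ := hx
      rw [fIncl_dot, (mem_dualSub F n W u).1 hu w hw, map_zero]
    | zero => simp
    | add x y _ _ hx hy => rw [add_dotProduct, hx, hy, add_zero]
    | smul c x _ hx => rw [smul_dotProduct, hx, smul_zero]
  · intro h
    let b := Module.finBasis F E
    have hsum : a = ∑ i, b i • fIncl F E n (fun j => b.repr (a j) i) := by
      ext j
      rw [Finset.sum_apply]
      conv_lhs => rw [← b.sum_repr (a j)]
      refine Finset.sum_congr rfl fun i _ => ?_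
      rw [Pi.smul_apply, fIncl_app, Algebra.smul_def, smul_eq_mul, mul_comm]
    rw [hsum]
    refine Submodule.sum_mem _ fun i _ => Submodule.smul_mem _ _ (Submodule.subset_span ⟨_, ?_, rfl⟩)
    rw [SetLike.mem_coe, ← dualSub_dualSub F n W, mem_dualSub]
    intro u hu
    have h0 := congrArg (fun x => b.repr x i) (h u hu)
    simp only [dotProduct, fIncl_app, map_sum, map_zero] at h0
    rw [Finsupp.finsetSum_apply] at h0
    rw [← Finsupp.zero_apply (M := F) (a := i), ← h0, dotProduct]
    refine Finset.sum_congr rfl fun j _ => ?_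
    rw [mul_comm (a j), ← Algebra.smul_def, map_smul, Finsupp.smul_apply, smul_eq_mul]

theorem rankSupport_eq [FiniteDimensional F E] (n : ℕ) (A : Set (Fin n → E)) :
    rankSupport F E n A = dualSub F n (perpF F E n A) := by
  apply le_antisymm
  · refine sInf_le fun a ha => ?_
    rw [SetLike.mem_coe, mem_span_incl, dualSub_dualSub]
    exact fun u hu => hu a ha
  · refine le_sInf fun W hW => ?_
    rw [← dualSub_dualSub F n W]
    apply dualSub_anti
    intro u hu a ha
    exact (mem_span_incl F E n W a).1 (hW ha) u hu

theorem rankSupport_le_iff [FiniteDimensional F E] (n : ℕ) (A B : Set (Fin n → E)) :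
    rankSupport F E n A ≤ rankSupport F E n B ↔ perpF F E n B ≤ perpF F E n A := by
  rw [rankSupport_eq, rankSupport_eq]
  constructor
  · intro h
    have := dualSub_anti F n h
    rwa [dualSub_dualSub, dualSub_dualSub] at this
  · exact dualSub_anti F n

theorem mem_U_iff (n k : ℕ) (G : Fin k → Fin n → E) (v : Fin k → E) :
    v ∈ Submodule.span F (Set.range fun j => fun i => G i j) ↔
      ∃ u : Fin n → F, Matrix.mulVec (Matrix.of G) (fIncl F E n u) = v := by
  rw [Submodule.mem_span_range_iff_exists_fun]
  refine exists_congr fun u => ?_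
  have : ∑ j, u j • (fun i => G i j) = Matrix.mulVec (Matrix.of G) (fIncl F E n u) := by
    ext i
    simp [Matrix.mulVec, dotProduct, fIncl_app, Algebra.smul_def, mul_comm]
  rw [this]

theorem perp_map (n k : ℕ) (G : Fin k → Fin n → E) (B : Submodule E (Fin k → E))
    (u : Fin n → F) :
    u ∈ perpF F E n (B.map (Matrix.of G).vecMulLinear : Set (Fin n → E)) ↔
      Matrix.mulVec (Matrix.of G) (fIncl F E n u) ∈ dualSub E k B := by
  rw [mem_perpF, mem_dualSub]
  simp [Matrix.dotProduct_mulVec]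

theorem supp_map_le_iff [FiniteDimensional F E] (n k : ℕ) (G : Fin k → Fin n → E)
    (B B' : Submodule E (Fin k → E)) :
    rankSupport F E n (B.map (Matrix.of G).vecMulLinear : Set (Fin n → E)) ≤
      rankSupport F E n (B'.map (Matrix.of G).vecMulLinear : Set (Fin n → E)) ↔
    ∀ v ∈ Submodule.span F (Set.range fun j => fun i => G i j),
      v ∈ dualSub E k B' → v ∈ dualSub E k B := by
  rw [rankSupport_le_iff]
  constructor
  · intro h v hv hv'
    obtain ⟨u, rfl⟩ := (mem_U_iff F E n k G v).1 hv
    rw [← perp_map] at hv' ⊢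
    exact h hv'
  · intro h u hu
    rw [perp_map] at hu ⊢
    exact h _ ((mem_U_iff F E n k G _).2 ⟨u, rfl⟩) hu

theorem map_code_range (n k : ℕ) (C : Submodule E (Fin n → E)) (G : Fin k → Fin n → E)
    (hG : Submodule.span E (Set.range G) = C) :
    LinearMap.range (Matrix.of G).vecMulLinear = C := by
  rw [← hG]
  ext v
  rw [LinearMap.mem_range, Submodule.mem_span_range_iff_exists_fun]
  refine exists_congr fun γ => ?_
  have : (Matrix.of G).vecMulLinear γ = ∑ i, γ i • G i := by
    ext j
    simp [Matrix.vecMul, dotProduct]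
  rw [this]

theorem finrank_map_inj (n k : ℕ) (f : (Fin k → E) →ₗ[E] (Fin n → E))
    (hf : Function.Injective f) (B : Submodule E (Fin k → E)) :
    Module.finrank E (B.map f) = Module.finrank E B :=
  (LinearEquiv.finrank_eq (Submodule.equivMapOfInjective f hf B)).symm

theorem map_code_inj (n k : ℕ) (C : Submodule E (Fin n → E)) (hC : Module.finrank E C = k)
    (G : Fin k → Fin n → E) (hG : Submodule.span E (Set.range G) = C) :
    Function.Injective (Matrix.of G).vecMulLinear := by
  have h1 := LinearMap.finrank_range_add_finrank_ker (Matrix.of G).vecMulLinear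
  rw [map_code_range E n k C G hG, hC, Module.finrank_fin_fun] at h1
  rw [← LinearMap.ker_eq_bot]
  exact Submodule.finrank_eq_zero.1 (by omega)

theorem span_U_top (n k : ℕ) (C : Submodule E (Fin n → E)) (hC : Module.finrank E C = k)
    (G : Fin k → Fin n → E) (hG : Submodule.span E (Set.range G) = C)
    (V : Submodule E (Fin k → E))
    (hV : ∀ v ∈ Submodule.span F (Set.range fun j => fun i => G i j), v ∈ V) : V = ⊤ := by
  have hbot : dualSub E k V = ⊥ := by
    rw [eq_bot_iff]
    intro γ hγ
    rw [mem_dualSub] at hγ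
    have : (Matrix.of G).vecMulLinear γ = 0 := by
      ext j
      have := hγ _ (hV _ (Submodule.subset_span ⟨j, rfl⟩))
      rw [dotProduct_comm] at this
      exact this
    exact map_code_inj E n k C hC G hG (by rw [this, map_zero])
  rw [← dualSub_dualSub E k V, hbot, eq_top_iff]
  intro v _
  rw [mem_dualSub]
  intro γ hγ
  rw [(Submodule.mem_bot E).1 hγ, zero_dotProduct]

theorem part_one [FiniteDimensional F E] (n k : ℕ)
    (C : Submodule E (Fin n → E)) (hC : Module.finrank E C = k)
    (G : Fin k → Fin n → E) (hG : Submodule.span E (Set.range G) = C)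
    (U : Submodule F (Fin k → E))
    (hU : U = Submodule.span F (Set.range fun j => fun i => G i j))
    (B : Submodule E (Fin k → E)) :
    RankMinimal F E n C (B.map (Matrix.of G).vecMulLinear) ↔
      Submodule.span E ((dualSub E k B : Set (Fin k → E)) ∩ (U : Set (Fin k → E)))
        = dualSub E k B := by
  have hinj := map_code_inj E n k C hC G hG
  have hfr : ∀ B : Submodule E (Fin k → E),
      Module.finrank E (B.map (Matrix.of G).vecMulLinear) = Module.finrank E B := fun B =>
    finrank_map_inj E n k _ hinj B
  have hle : Submodule.span E ((dualSub E k B : Set (Fin k → E)) ∩ (U : Set (Fin k → E)))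
        ≤ dualSub E k B := Submodule.span_le.2 Set.inter_subset_left
  have hBk : Module.finrank E B ≤ k := by
    simpa using Submodule.finrank_le B
  constructor
  · intro hmin
    by_contra hne
    have hlt := lt_of_le_of_ne hle hne
    have hflt := Submodule.finrank_lt_finrank_of_lt hlt
    set W := Submodule.span E ((dualSub E k B : Set (Fin k → E)) ∩ (U : Set (Fin k → E))) with hW
    have hu : ∃ u ∈ U, u ∉ dualSub E k B := by
      by_contra hh
      push Not at hh
      apply hne
      have h1 : W = ⊤ := by
        refine span_U_top F E n k C hC G hG W fun v hv => ?_
        rw [← hU] at hv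
        exact Submodule.subset_span ⟨hh v hv, hv⟩
      exact le_antisymm hle (by rw [h1]; exact le_top)
    obtain ⟨u, huU, hu⟩ := hu
    have huW : u ∉ W := fun h => hu (hle h)
    obtain ⟨V, hWV, hVd⟩ := exists_super E (Fin k → E) (W ⊔ Submodule.span E {u})
      (Module.finrank E (dualSub E k B))
      (by rw [Submodule.finrank_sup_span_singleton huW]; omega) (Submodule.finrank_le _)
    have h2 := hmin ((dualSub E k V).map (Matrix.of G).vecMulLinear)
      (by rw [← map_code_range E n k C G hG]; exact LinearMap.map_le_range)
      (by rw [hfr, hfr, finrank_dualSub, hVd, finrank_dualSub]; omega)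
      (by
        rw [supp_map_le_iff, dualSub_dualSub, ← hU]
        intro v hv hv'
        exact hWV (Submodule.mem_sup_left (Submodule.subset_span ⟨hv', hv⟩)))
    have h3 := (supp_map_le_iff F E n k G _ _).1 h2.ge
    rw [dualSub_dualSub, ← hU] at h3
    exact hu (h3 u huU (hWV (Submodule.mem_sup_right (Submodule.mem_span_singleton_self u))))
  · intro hspan D hD hdim hsup
    obtain ⟨B', rfl⟩ : ∃ B' : Submodule E (Fin k → E), B'.map (Matrix.of G).vecMulLinear = D :=
      ⟨D.comap _, Submodule.map_comap_eq_of_le (by rwa [map_code_range E n k C G hG])⟩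
    rw [hfr, hfr] at hdim
    rw [supp_map_le_iff, ← hU] at hsup
    have h1 : dualSub E k B ≤ dualSub E k B' := by
      rw [← hspan, Submodule.span_le]
      rintro v ⟨hv, hv'⟩
      exact hsup v hv' hv
    have h2 : dualSub E k B = dualSub E k B' :=
      Submodule.eq_of_le_of_finrank_eq h1 (by rw [finrank_dualSub, finrank_dualSub, hdim])
    have h3 : B' = B := by rw [← dualSub_dualSub E k B', ← h2, dualSub_dualSub]
    rw [h3]

end

/-- Theorem 4.3: let `C` be an `[n,k]` code with generator matrix `G` and `U` the `F`-span
of the columns of `G` in `E^k`. (i) For any `E`-subspace `B` of `E^k` and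
`D = {γG : γ ∈ B}`, `D` is rank minimal in `C` iff the `E`-span of `B‡ ∩ U` equals `B‡`.
(ii) For any `r ∈ {0, …, k}`, `C` is `r`-minimal iff `U` is a cutting `r`-blocking set
of `E^k`. -/
theorem statement12 (F E : Type*) [Field F] [Field E] [Algebra F E]
    [FiniteDimensional F E] (m : ℕ) (hm : Module.finrank F E = m)
    (n k : ℕ) (hk : 1 ≤ k) (hkn : k ≤ n)
    (C : Submodule E (Fin n → E)) (hC : Module.finrank E C = k)
    (G : Fin k → Fin n → E) (hG : Submodule.span E (Set.range G) = C)
    (U : Submodule F (Fin k → E))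
    (hU : U = Submodule.span F (Set.range fun j => fun i => G i j)) :
    (∀ B : Submodule E (Fin k → E),
        RankMinimal F E n C (B.map (Matrix.of G).vecMulLinear) ↔
          Submodule.span E ((dualSub E k B : Set (Fin k → E)) ∩ (U : Set (Fin k → E)))
            = dualSub E k B) ∧
      (∀ r : ℕ, r ≤ k →
        (IsRMinimal F E n C r ↔ IsCuttingBlocking E (U : Set (Fin k → E)) r)) := by
  have h1 := part_one F E n k C hC G hG U hU
  refine ⟨h1, fun r hr => ?_⟩
  have hinj := map_code_inj E n k C hC G hG
  constructor
  · intro h V hV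
    rw [Module.finrank_fin_fun] at hV
    have h2 := (h1 (dualSub E k V)).1 (h _
      (by rw [← map_code_range E n k C G hG]; exact LinearMap.map_le_range)
      (by rw [finrank_map_inj E n k _ hinj, finrank_dualSub, hV]; omega))
    rw [dualSub_dualSub, Set.inter_comm] at h2
    exact h2
  · intro h D hD hdim
    obtain ⟨B, rfl⟩ : ∃ B : Submodule E (Fin k → E), B.map (Matrix.of G).vecMulLinear = D :=
      ⟨D.comap _, Submodule.map_comap_eq_of_le (by rwa [map_code_range E n k C G hG])⟩
    rw [finrank_map_inj E n k _ hinj] at hdim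
    rw [h1, Set.inter_comm]
    exact h _ (by rw [finrank_dualSub, hdim, Module.finrank_fin_fun])
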